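/- Let ε > 0 and let η be the inverse Fourier transform of η̂(ξ) = (1+ξ²)^{-1/4}(1+log(1+ξ²))^{-2}. Then Λ^ε η is a well-defined smooth function on ℝ \ {0}, and for every k ∈ ℕ there is a constant C_k such that |(Λ^ε η)(x)| ≤ C_k (1+|x|)^{-k} for all |x| ≥ 1. -/

import Mathlib

/-!
The weight `(1 + ξ²) ^ b (1 + log (1 + ξ²)) ^ (-c)` is a symbol of order `2 b < 0`: each derivative
gains one power of decay. It tends to zero at infinity and its derivative is integrable, so one
integration by parts shows that the improper Fourier integral converges at every `w ≠ 0`. Further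
integrations by parts write the limit as `(2πiw) ^ (-(n + 1))` times the Fourier transform of the
`(n + 1)`-st derivative. That transform is bounded, which gives the decay, and it is `n` times
continuously differentiable, which gives the smoothness since `n` is arbitrary.
-/

open MeasureTheory Real Filter Complex

open Asymptotics
open scoped ContDiff FourierTransform Topology

section Weight

lemma one_le_one_add_sq (x : ℝ) : 1 ≤ 1 + x ^ 2 :=
  le_add_of_nonneg_right (sq_nonneg x)

lemma one_add_sq_pos (x : ℝ) : 0 < 1 + x ^ 2 :=
  one_pos.trans_le (one_le_one_add_sq x)

lemma one_le_one_add_log_one_add_sq (x : ℝ) : 1 ≤ 1 + Real.log (1 + x ^ 2) :=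
  le_add_of_nonneg_right (Real.log_nonneg (one_le_one_add_sq x))

lemma abs_pow_le_one_add_sq_rpow (n : ℕ) (x : ℝ) : |x| ^ n ≤ (1 + x ^ 2) ^ ((n : ℝ) / 2) := by
  have abs_le : |x| ≤ (1 + x ^ 2) ^ (1 / 2 : ℝ) := by
    rw [← Real.sqrt_eq_rpow]
    exact Real.abs_le_sqrt (by linarith)
  calc |x| ^ n ≤ ((1 + x ^ 2) ^ (1 / 2 : ℝ)) ^ n := by gcongr
    _ = (1 + x ^ 2) ^ ((n : ℝ) / 2) := by
      rw [← Real.rpow_mul_natCast (one_add_sq_pos x).le]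
      congr 1
      ring

lemma pow_mul_one_add_sq_rpow_isBigO (n : ℕ) (a : ℝ) :
    (fun x : ℝ => x ^ n * (1 + x ^ 2) ^ a) =O[⊤] fun x => (1 + x ^ 2) ^ (n / 2 + a) := by
  refine IsBigO.of_bound' (Eventually.of_forall fun x => ?_)
  have hx := one_add_sq_pos x
  rw [norm_mul, norm_pow, Real.norm_of_nonneg (Real.rpow_nonneg hx.le a),
    Real.norm_of_nonneg (Real.rpow_nonneg hx.le _), Real.rpow_add hx]
  gcongr
  exact abs_pow_le_one_add_sq_rpow n x

lemma integrable_one_add_sq_rpow {a : ℝ} (ha : a < -1 / 2) :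
    Integrable fun x : ℝ => (1 + x ^ 2) ^ a := by
  have h := integrable_rpow_neg_one_add_norm_sq (E := ℝ) (μ := volume) (r := -(2 * a))
    (by rw [Module.finrank_self, Nat.cast_one]; linarith)
  simpa using h

lemma tendsto_one_add_sq_rpow_cocompact {a : ℝ} (ha : a < 0) :
    Tendsto (fun x : ℝ => (1 + x ^ 2) ^ a) (cocompact ℝ) (𝓝 0) := by
  have h_top : Tendsto (fun x : ℝ => 1 + ‖x‖ ^ 2) (cocompact ℝ) atTop :=
    tendsto_atTop_add_const_left _ _
      ((tendsto_pow_atTop two_ne_zero).comp (tendsto_norm_cocompact_atTop (E := ℝ)))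
  simpa [Function.comp_def] using (tendsto_rpow_neg_atTop (neg_pos.2 ha)).comp h_top

end Weight

section Symbol

variable {E F : Type*} [NormedAddCommGroup E] [NormedSpace ℝ E]
  [NormedAddCommGroup F] [NormedSpace ℝ F] {s : ℝ} {f : ℝ → E}

/-- `f` is a (one-dimensional, constant-coefficient) symbol of order `s`: it is smooth, and each
derivative gains one power of decay, `f⁽ⁿ⁾(x) = O(⟨x⟩ ^ (s - n))` with `⟨x⟩ = (1 + x²) ^ (1 / 2)`.
The filter `⊤` makes the estimates uniform on all of `ℝ`. -/
structure IsSymbol (s : ℝ) (f : ℝ → E) : Prop where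
  contDiff : ContDiff ℝ ∞ f
  iteratedDeriv_isBigO (n : ℕ) : iteratedDeriv n f =O[⊤] fun x => (1 + x ^ 2) ^ ((s - n) / 2)

namespace IsSymbol

lemma isBigO (hf : IsSymbol s f) : f =O[⊤] fun x => (1 + x ^ 2) ^ (s / 2) := by
  simpa only [iteratedDeriv_zero, Nat.cast_zero, sub_zero] using hf.iteratedDeriv_isBigO 0

protected lemma deriv (hf : IsSymbol s f) : IsSymbol (s - 1) (deriv f) where
  contDiff := (contDiff_infty_iff_deriv.1 hf.contDiff).2
  iteratedDeriv_isBigO n := by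
    have h := hf.iteratedDeriv_isBigO (n + 1)
    rwa [iteratedDeriv_succ', Nat.cast_succ, add_comm, ← sub_sub] at h

protected lemma iteratedDeriv (hf : IsSymbol s f) (n : ℕ) :
    IsSymbol (s - n) (iteratedDeriv n f) := by
  induction n with
  | zero => simpa using hf
  | succ n ih =>
    rw [iteratedDeriv_succ, Nat.cast_succ, ← sub_sub]
    exact ih.deriv

lemma linearIsometry_comp (hf : IsSymbol s f) (L : E →ₗᵢ[ℝ] F) : IsSymbol s (L ∘ f) where
  contDiff := L.contDiff.comp hf.contDiff
  iteratedDeriv_isBigO n := by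
    refine (IsBigO.of_bound' (Eventually.of_forall fun x => ?_)).trans (hf.iteratedDeriv_isBigO n)
    rw [← norm_iteratedFDeriv_eq_norm_iteratedDeriv, ← norm_iteratedFDeriv_eq_norm_iteratedDeriv,
      L.norm_iteratedFDeriv_comp_left hf.contDiff.contDiffAt (mod_cast le_top)]

lemma tendsto_cocompact (hf : IsSymbol s f) (hs : s < 0) : Tendsto f (cocompact ℝ) (𝓝 0) :=
  (hf.isBigO.mono le_top).trans_tendsto (tendsto_one_add_sq_rpow_cocompact (by linarith))

lemma integrable_pow_mul_norm (hf : IsSymbol s f) {m : ℕ} (hs : s + m < -1) :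
    Integrable fun x => ‖x‖ ^ m * ‖f x‖ := by
  have h_isBigO : (fun x => ‖x‖ ^ m * ‖f x‖) =O[⊤] fun x => (1 + x ^ 2) ^ ((m : ℝ) / 2 + s / 2) :=
    (((isBigO_refl (fun x : ℝ => x ^ m) ⊤).norm_left.congr_left fun x => norm_pow x m).mul
      hf.isBigO.norm_left).trans (pow_mul_one_add_sq_rpow_isBigO m (s / 2))
  have hf_cont := hf.contDiff.continuous
  exact h_isBigO.integrable (by fun_prop) (integrable_one_add_sq_rpow (by linarith))

lemma integrable (hf : IsSymbol s f) (hs : s < -1) : Integrable f :=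
  hf.isBigO.integrable hf.contDiff.continuous.aestronglyMeasurable
    (integrable_one_add_sq_rpow (by linarith))

end IsSymbol

end Symbol

section LogSymbol

/-- The elementary symbol `x ^ j (1 + x²) ^ b (1 + log (1 + x²)) ^ (-c)`, of order `j + 2 b` for
`0 ≤ c`. The monomial factor makes the linear span of this family stable under differentiation. -/
noncomputable def logSymbol (j : ℕ) (b c x : ℝ) : ℝ :=
  x ^ j * (1 + x ^ 2) ^ b * (1 + Real.log (1 + x ^ 2)) ^ (-c)

variable (j : ℕ) (b c : ℝ)

lemma contDiff_logSymbol : ContDiff ℝ ∞ (logSymbol j b c) := by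
  have h_sq : ContDiff ℝ ∞ fun x : ℝ => 1 + x ^ 2 := by fun_prop
  have h_log : ContDiff ℝ ∞ fun x : ℝ => 1 + Real.log (1 + x ^ 2) :=
    contDiff_const.add (h_sq.log fun x => (one_add_sq_pos x).ne')
  exact ((contDiff_id.pow j).mul (h_sq.rpow_const_of_ne fun x => (one_add_sq_pos x).ne')).mul
    (h_log.rpow_const_of_ne fun x => (one_pos.trans_le (one_le_one_add_log_one_add_sq x)).ne')

lemma deriv_logSymbol :
    deriv (logSymbol j b c) = fun x => j * logSymbol (j - 1) b c x
      + 2 * b * logSymbol (j + 1) (b - 1) c x - 2 * c * logSymbol (j + 1) (b - 1) (c + 1) x := by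
  ext x
  have hx := one_add_sq_pos x
  have hlog : 0 < 1 + Real.log (1 + x ^ 2) := one_pos.trans_le (one_le_one_add_log_one_add_sq x)
  have h_sq : HasDerivAt (fun x : ℝ => 1 + x ^ 2) (2 * x) x := by
    simpa using (hasDerivAt_pow 2 x).const_add 1
  have h_rpow := h_sq.rpow_const (p := b) (.inl hx.ne')
  have h_log := ((h_sq.log hx.ne').const_add 1).rpow_const (p := -c) (.inl hlog.ne')
  refine ((((hasDerivAt_pow j x).mul h_rpow).mul h_log).congr_deriv ?_).deriv
  simp only [logSymbol, Pi.mul_apply, Real.rpow_sub_one hx.ne', neg_add',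
    Real.rpow_sub_one hlog.ne']
  field_simp
  ring

variable {c}

lemma logSymbol_isBigO (hc : 0 ≤ c) :
    logSymbol j b c =O[⊤] fun x => (1 + x ^ 2) ^ ((j + 2 * b) / 2) := by
  have h_log : (fun x : ℝ => (1 + Real.log (1 + x ^ 2)) ^ (-c)) =O[⊤] fun _ => (1 : ℝ) := by
    refine IsBigO.of_bound' (Eventually.of_forall fun x => ?_)
    have hx := one_le_one_add_log_one_add_sq x
    rw [Real.norm_of_nonneg (by positivity), norm_one]
    exact Real.rpow_le_one_of_one_le_of_nonpos hx (neg_nonpos.2 hc)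
  refine ((pow_mul_one_add_sq_rpow_isBigO j b).mul h_log).congr_right fun x => ?_
  rw [mul_one]
  congr 1
  ring

lemma iteratedDeriv_logSymbol_isBigO (n : ℕ) (hc : 0 ≤ c) :
    iteratedDeriv n (logSymbol j b c) =O[⊤] fun x => (1 + x ^ 2) ^ ((j + 2 * b - n) / 2) := by
  induction n generalizing j b c with
  | zero => simpa only [iteratedDeriv_zero, Nat.cast_zero, sub_zero] using logSymbol_isBigO j b hc
  | succ n ih =>
    have h_smooth (j b c) (x : ℝ) : ContDiffAt ℝ n (logSymbol j b c) x :=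
      ((contDiff_logSymbol j b c).of_le (mod_cast le_top)).contDiffAt
    have h_deriv : iteratedDeriv (n + 1) (logSymbol j b c) = fun x =>
        j * iteratedDeriv n (logSymbol (j - 1) b c) x
          + 2 * b * iteratedDeriv n (logSymbol (j + 1) (b - 1) c) x
          - 2 * c * iteratedDeriv n (logSymbol (j + 1) (b - 1) (c + 1)) x := by
      ext x
      have h (a : ℝ) (j b c) : ContDiffAt ℝ n (fun x => a * logSymbol j b c x) x :=
        contDiffAt_const.mul (h_smooth j b c x)
      rw [iteratedDeriv_succ', deriv_logSymbol, iteratedDeriv_fun_sub ((h _ _ _ _).add (h _ _ _ _))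
        (h _ _ _ _), iteratedDeriv_fun_add (h _ _ _ _) (h _ _ _ _)]
      simp only [iteratedDeriv_const_mul_field]
    have h_pow : (fun x => j * iteratedDeriv n (logSymbol (j - 1) b c) x) =O[⊤]
        fun x => (1 + x ^ 2) ^ ((j + 2 * b - (n + 1 : ℕ)) / 2) := by
      rcases j with _ | j
      · simpa only [Nat.cast_zero, zero_mul] using isBigO_zero _ _
      · refine ((ih j b hc).const_mul_left _).congr_right fun x => ?_
        push_cast
        ring_nf
    have h_rpow (c' : ℝ) (hc' : 0 ≤ c') : iteratedDeriv n (logSymbol (j + 1) (b - 1) c') =O[⊤]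
        fun x => (1 + x ^ 2) ^ ((j + 2 * b - (n + 1 : ℕ)) / 2) := by
      refine (ih (j + 1) (b - 1) hc').congr_right fun x => ?_
      push_cast
      ring_nf
    rw [h_deriv]
    exact (h_pow.add ((h_rpow c hc).const_mul_left _)).sub
      ((h_rpow (c + 1) (by linarith)).const_mul_left _)

lemma isSymbol_logSymbol (hc : 0 ≤ c) : IsSymbol (j + 2 * b) (logSymbol j b c) where
  contDiff := contDiff_logSymbol j b c
  iteratedDeriv_isBigO n := iteratedDeriv_logSymbol_isBigO j b n hc

end LogSymbol

section ImproperFourier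

variable {E : Type*} [NormedAddCommGroup E] [NormedSpace ℂ E] {s w : ℝ} {f : ℝ → E}

/-- The Fourier transform of `f` off the origin, obtained from that of `deriv f` through
`𝓕 (deriv f) w = 2πiw 𝓕 f w`. It extends `𝓕 f` to functions which are not integrable but whose
derivative is. The value at `w = 0` is the junk value `0`. -/
noncomputable def improperFourier (f : ℝ → E) (w : ℝ) : E :=
  (2 * π * I * w)⁻¹ • 𝓕 (deriv f) w

lemma hasDerivAt_fourierChar_neg_mul_div (hw : w ≠ 0) (v : ℝ) :
    HasDerivAt (fun v : ℝ => -(2 * π * I * w)⁻¹ * (𝐞 (-(v * w)) : ℂ)) (𝐞 (-(v * w))) v := by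
  have h_inner : HasDerivAt (fun v : ℝ => -(v * w)) (-w) v := by
    simpa using (hasDerivAt_id' v).mul_const (-w)
  refine (((Real.hasDerivAt_fourierChar _).scomp v h_inner).const_mul _).congr_deriv ?_
  have h_pi : (π : ℂ) ≠ 0 := ofReal_ne_zero.2 Real.pi_ne_zero
  have hw' : (w : ℂ) ≠ 0 := ofReal_ne_zero.2 hw
  rw [Complex.real_smul, ofReal_neg]
  field_simp

lemma intervalIntegral_fourierChar_smul [CompleteSpace E] (hf : Differentiable ℝ f)
    (hf' : Integrable (deriv f)) (hw : w ≠ 0) (a b : ℝ) :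
    ∫ v in a..b, 𝐞 (-(v * w)) • f v = (2 * π * I * w : ℂ)⁻¹ •
      (𝐞 (-(a * w)) • f a - 𝐞 (-(b * w)) • f b + ∫ v in a..b, 𝐞 (-(v * w)) • deriv f v) := by
  have h_cont : Continuous fun v : ℝ => (𝐞 (-(v * w)) : ℂ) := by fun_prop
  have h_parts := intervalIntegral.integral_smul_deriv_eq_deriv_smul
    (fun v _ => hasDerivAt_fourierChar_neg_mul_div hw v) (fun v _ => (hf v).hasDerivAt)
    (h_cont.intervalIntegrable a b) hf'.intervalIntegrable
  simp only [mul_smul, neg_smul, intervalIntegral.integral_neg, intervalIntegral.integral_smul]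
    at h_parts
  simp only [Circle.smul_def, smul_add, smul_sub]
  linear_combination (norm := module) h_parts

lemma tendsto_intervalIntegral_improperFourier [CompleteSpace E] (hf : Differentiable ℝ f)
    (hf' : Integrable (deriv f)) (hf_zero : Tendsto f (cocompact ℝ) (𝓝 0)) (hw : w ≠ 0)
    {ι : Type*} {l : Filter ι} [l.IsCountablyGenerated] {a b : ι → ℝ}
    (ha : Tendsto a l atBot) (hb : Tendsto b l atTop) :
    Tendsto (fun i => ∫ v in a i..b i, 𝐞 (-(v * w)) • f v) l (𝓝 (improperFourier f w)) := by
  have h_boundary {c : ι → ℝ} (hc : Tendsto c l (cocompact ℝ)) :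
      Tendsto (fun i => 𝐞 (-(c i * w)) • f (c i)) l (𝓝 0) :=
    squeeze_zero_norm (fun i => (Circle.norm_smul _ _).le)
      (tendsto_zero_iff_norm_tendsto_zero.1 (hf_zero.comp hc))
  have h_integrable : Integrable fun v => 𝐞 (-(v * w)) • deriv f v := by
    simpa [mul_comm] using (Real.fourierIntegral_convergent_iff w).2 hf'
  have h_integral := intervalIntegral_tendsto_integral h_integrable ha hb
  simp only [intervalIntegral_fourierChar_smul hf hf' hw, improperFourier, Real.fourier_real_eq]
  simpa using (((h_boundary (ha.mono_right atBot_le_cocompact)).sub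
    (h_boundary (hb.mono_right atTop_le_cocompact))).add h_integral).const_smul
      (2 * π * I * w : ℂ)⁻¹

namespace IsSymbol

lemma improperFourier_eq_smul_fourier_iteratedDeriv (hf : IsSymbol s f) (hs : s < 0) (hw : w ≠ 0)
    (n : ℕ) :
    improperFourier f w = ((2 * π * I * w) ^ (n + 1))⁻¹ • 𝓕 (iteratedDeriv (n + 1) f) w := by
  have h_integrable (m : ℕ) : Integrable (iteratedDeriv m (deriv f)) :=
    (hf.deriv.iteratedDeriv m).integrable (by linarith [m.cast_nonneg (α := ℝ)])
  have h_ne : (2 * π * I * w : ℂ) ≠ 0 := by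
    simp [hw, Real.pi_ne_zero]
  rw [improperFourier, iteratedDeriv_succ', Real.fourier_iteratedDeriv (N := ⊤) hf.deriv.contDiff
    (fun m _ => h_integrable m) le_top, smul_smul]
  congr 1
  rw [eq_comm, inv_mul_eq_iff_eq_mul₀ (pow_ne_zero _ h_ne), pow_succ, mul_inv_cancel_right₀ h_ne]

lemma contDiff_fourier {n : ℕ} (hf : IsSymbol s f) (hs : s + n < -1) : ContDiff ℝ n (𝓕 f) :=
  Real.contDiff_fourier (N := n) fun m hm => hf.integrable_pow_mul_norm <| by
    have : (m : ℝ) ≤ n := mod_cast hm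
    linarith

lemma contDiffOn_improperFourier (hf : IsSymbol s f) (hs : s < 0) :
    ContDiffOn ℝ ∞ (improperFourier f) {0}ᶜ := by
  refine contDiffOn_infty.2 fun n => ?_
  have h_fourier : ContDiff ℝ n (𝓕 (iteratedDeriv (n + 1) f)) :=
    (hf.iteratedDeriv (n + 1)).contDiff_fourier (by push_cast; linarith)
  have h_pow : ContDiff ℝ n fun w : ℝ => (2 * π * I * w) ^ (n + 1) :=
    (contDiff_const.mul ofRealCLM.contDiff).pow (n + 1)
  refine ((h_pow.contDiffOn.inv fun w hw => ?_).smul h_fourier.contDiffOn).congr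
    fun w hw => hf.improperFourier_eq_smul_fourier_iteratedDeriv hs hw n
  have hw : w ≠ 0 := hw
  simp [hw, Real.pi_ne_zero]

lemma tendsto_improperFourier [CompleteSpace E] (hf : IsSymbol s f) (hs : s < 0) (hw : w ≠ 0) :
    Tendsto (fun R : ℝ => ∫ v in (-R)..R, 𝐞 (-(v * w)) • f v) atTop
      (𝓝 (improperFourier f w)) :=
  tendsto_intervalIntegral_improperFourier (hf.contDiff.differentiable (by simp))
    (hf.deriv.integrable (by linarith)) (hf.tendsto_cocompact hs) hw
    tendsto_neg_atTop_atBot tendsto_id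

lemma exists_norm_improperFourier_le (hf : IsSymbol s f) (hs : s < 0) (n : ℕ) :
    ∃ C, 0 ≤ C ∧ ∀ w ≠ 0, ‖improperFourier f w‖ ≤ C * (|2 * π * w| ^ (n + 1))⁻¹ := by
  refine ⟨∫ v, ‖iteratedDeriv (n + 1) f v‖, by positivity, fun w hw => ?_⟩
  have h_fourier : ‖𝓕 (iteratedDeriv (n + 1) f) w‖ ≤ ∫ v, ‖iteratedDeriv (n + 1) f v‖ :=
    VectorFourier.norm_fourierIntegral_le_integral_norm _ _ _ _ _
  have h_factor : ‖((2 * π * I * w) ^ (n + 1))⁻¹‖ = (|2 * π * w| ^ (n + 1))⁻¹ := by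
    simp [abs_mul]
  rw [hf.improperFourier_eq_smul_fourier_iteratedDeriv hs hw n, norm_smul, mul_comm, h_factor]
  gcongr

end IsSymbol

end ImproperFourier

lemma fourierChar_neg_mul_neg_div_two_pi (x ξ : ℝ) :
    (𝐞 (-(ξ * (-x / (2 * π)))) : ℂ) = Complex.exp (I * x * ξ) := by
  rw [Real.fourierChar_apply]
  have h_pi : (π : ℂ) ≠ 0 := ofReal_ne_zero.2 Real.pi_ne_zero
  congr 1
  push_cast
  field_simp

lemma inv_pow_succ_le_one_add_rpow_neg {t : ℝ} (ht : 1 ≤ t) (k : ℕ) :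
    (t ^ (k + 1))⁻¹ ≤ 2 ^ k * (1 + t) ^ (-(k : ℝ)) := by
  have ht_pos : 0 < t := one_pos.trans_le ht
  rw [Real.rpow_neg (by positivity), Real.rpow_natCast, ← div_eq_mul_inv, ← div_pow]
  calc (t ^ (k + 1))⁻¹ ≤ t⁻¹ ^ k := by
        rw [← inv_pow]
        exact pow_le_pow_of_le_one (by positivity) (inv_le_one_of_one_le₀ ht) k.le_succ
    _ ≤ (2 / (1 + t)) ^ k := by
        gcongr
        rw [inv_le_comm₀ ht_pos (by positivity), inv_div]
        linarith

theorem lambda_eps_eta_smooth_and_rapidly_decaying_away_from_origin_general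
    {b c : ℝ} (hb : b < 0) (hc : 0 ≤ c) :
    ∃ g : ℝ → ℂ,
      (∀ x : ℝ, x ≠ 0 →
        Tendsto (fun R : ℝ => (1 / (2 * π)) * ∫ ξ in (-R)..R,
            Complex.exp (Complex.I * x * ξ) *
              (((1 + ξ ^ 2) ^ b * (1 + Real.log (1 + ξ ^ 2)) ^ (-c) : ℝ) : ℂ))
          atTop (nhds (g x))) ∧
      ContDiffOn ℝ (⊤ : ℕ∞) g {x : ℝ | x ≠ 0} ∧
      ∀ k : ℕ, ∃ C : ℝ, ∀ x : ℝ, 1 ≤ |x| → ‖g x‖ ≤ C * (1 + |x|) ^ (-(k : ℝ)) := by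
  have hf : IsSymbol (2 * b) (ofRealLI ∘ logSymbol 0 b c) := by
    simpa using (isSymbol_logSymbol 0 b hc).linearIsometry_comp ofRealLI
  have h_order : 2 * b < 0 := by linarith
  have h_ne {x : ℝ} (hx : x ≠ 0) : -x / (2 * π) ≠ 0 := by simp [hx, Real.pi_ne_zero]
  refine ⟨fun x => 1 / (2 * π) * improperFourier (ofRealLI ∘ logSymbol 0 b c) (-x / (2 * π)),
    fun x hx => ?_, ?_, fun k => ?_⟩
  · have h_tendsto := hf.tendsto_improperFourier h_order (h_ne hx)
    simpa [Circle.smul_def, fourierChar_neg_mul_neg_div_two_pi, logSymbol]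
      using h_tendsto.const_mul (1 / (2 * π) : ℂ)
  · exact contDiffOn_const.mul ((hf.contDiffOn_improperFourier h_order).comp
      (by fun_prop) fun x hx => h_ne hx)
  · obtain ⟨C, hC₀, hC⟩ := hf.exists_norm_improperFourier_le h_order k
    refine ⟨‖(1 / (2 * π) : ℂ)‖ * (C * 2 ^ k), fun x hx => ?_⟩
    have h_bound := hC _ (h_ne (abs_pos.1 (one_pos.trans_le hx)))
    rw [mul_div_cancel₀ _ (by positivity), abs_neg] at h_bound
    rw [norm_mul, mul_assoc, mul_assoc]
    gcongr
    exact h_bound.trans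
      (mul_le_mul_of_nonneg_left (inv_pow_succ_le_one_add_rpow_neg hx k) hC₀)

/-- `Λ^ε η`, the inverse Fourier transform of `(1+ξ²)^{ε/2-1/4}(1+log(1+ξ²))^{-2}`, is a
well-defined smooth function on `ℝ \ {0}` which decays faster than any algebraic order
for `|x| ≥ 1`. -/
theorem lambda_eps_eta_smooth_and_rapidly_decaying_away_from_origin
    (ε : ℝ) (hε : 0 < ε) (hε' : ε < 1 / 2) :
    ∃ g : ℝ → ℂ,
      (∀ x : ℝ, x ≠ 0 →
        Tendsto (fun R : ℝ => (1 / (2 * π)) * ∫ ξ in (-R)..R,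
            Complex.exp (Complex.I * x * ξ) *
              (((1 + ξ ^ 2) ^ (ε / 2 - 1 / 4) * (1 + Real.log (1 + ξ ^ 2)) ^ (-(2 : ℝ)) : ℝ) : ℂ))
          atTop (nhds (g x))) ∧
      ContDiffOn ℝ (⊤ : ℕ∞) g {x : ℝ | x ≠ 0} ∧
      ∀ k : ℕ, ∃ C : ℝ, ∀ x : ℝ, 1 ≤ |x| → ‖g x‖ ≤ C * (1 + |x|) ^ (-(k : ℝ)) :=
  lambda_eps_eta_smooth_and_rapidly_decaying_away_from_origin_general (by linarith) zero_le_two
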